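/- Let F'_y = (ı e_l + √2 ı e_0 - ı e_{-l} ⊂ e_1 ⊂ ⋯ ⊂ e_{l-1}), let B_{2l} = {g ∈ K : the matrix of g with respect to the ordered basis (e_1,…,e_l,e_0,e_{-l},…,e_{-1}) is upper triangular} (a Borel subgroup of K), let B_{2l-1} = {g ∈ SO(2l+1) : g e_0 = e_0, g(e_l - e_{-l}) = e_l - e_{-l}, and the matrix of g with respect to that ordered basis is upper triangular}, and let E_0 = (e_1 ⊂ ⋯ ⊂ e_l). Let W = {v ∈ ℂ^{2l+1} : β(v,e_0) = 0} = span(e_{±1},…,e_{±l}) and let X_W be the set of chains W_1 ⊂ ⋯ ⊂ W_l ⊂ W with dim W_i = i, β vanishing identically on W_l, and dim(W_l ∩ span(e_1,…,e_l)) ≡ l (mod 2). Then for all k, k' ∈ K one has B_{2l}·(k·F'_y) = B_{2l}·(k'·F'_y) if and only if B_{2l-1}·(k^{-1}·E_0) = B_{2l-1}·(k'^{-1}·E_0); consequently the assignment B_{2l}·(k·F'_y) ↦ B_{2l-1}·(k^{-1}·E_0) is a well-defined bijection from the set of B_{2l}-orbits on the K-orbit of F'_y onto the set of B_{2l-1}-orbits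 on X_W. -/

import Mathlib

open Module Submodule

noncomputable section

/-- `stdVec n m` is the `m`-th standard basis vector of `ℂ^n` (1-indexed); `0` out of range. -/
def stdVec (n m : ℕ) : Fin n → ℂ :=
  if h : 1 ≤ m ∧ m ≤ n then Pi.single (⟨m - 1, by omega⟩ : Fin n) 1 else 0

/-- `stdSub n k` is the subspace `U_k = span(e_1, …, e_k)` of `ℂ^n`. -/
def stdSub (n k : ℕ) : Submodule ℂ (Fin n → ℂ) :=
  span ℂ (stdVec n '' Set.Icc 1 k)

/-- The action of an invertible linear map of `ℂ^n` on a chain of subspaces. -/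
def actFlag (n : ℕ) (g : (Fin n → ℂ) ≃ₗ[ℂ] (Fin n → ℂ))
    (V : ℕ → Submodule ℂ (Fin n → ℂ)) (k : ℕ) : Submodule ℂ (Fin n → ℂ) :=
  Submodule.map g.toLinearMap (V k)

/-- The orbit of the chain `V` under a set `B` of invertible linear maps. -/
def orbitOf (n : ℕ) (B : Set ((Fin n → ℂ) ≃ₗ[ℂ] (Fin n → ℂ)))
    (V : ℕ → Submodule ℂ (Fin n → ℂ)) : Set (ℕ → Submodule ℂ (Fin n → ℂ)) :=
  {V' | ∃ b ∈ B, actFlag n b V = V'}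

/-- The symmetric bilinear form `β(x,y) = ∑_{k=1}^n x_k y_{n+1-k}` on `ℂ^n`. -/
def betaF (n : ℕ) (x y : Fin n → ℂ) : ℂ := ∑ k : Fin n, x k * y k.rev

/-- `SO(n,ℂ)` for the form `β`. -/
def SOgrp (n : ℕ) : Set ((Fin n → ℂ) ≃ₗ[ℂ] (Fin n → ℂ)) :=
  {g | LinearMap.det g.toLinearMap = 1 ∧ ∀ x y, betaF n (g x) (g y) = betaF n x y}

/-- A maximal isotropic flag `V 1 ⊂ ⋯ ⊂ V l` in `ℂ^n` (values pinned outside `1..l`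
so that two flags are equal iff they agree in degrees `1, …, l`). -/
def IsIsoFlag (n l : ℕ) (V : ℕ → Submodule ℂ (Fin n → ℂ)) : Prop :=
  (∀ i, i ≤ l → finrank ℂ ↥(V i) = i) ∧ (∀ i, V i ≤ V (i + 1)) ∧ (∀ i, l ≤ i → V i = V l) ∧
    (∀ u ∈ V l, ∀ w ∈ V l, betaF n u w = 0)

/-- The isotropic flag `(v 1 ⊂ ⋯ ⊂ v l)` spanned by `v 1, …, v l`. -/
def isoFlagOf (n l : ℕ) (v : ℕ → Fin n → ℂ) (k : ℕ) : Submodule ℂ (Fin n → ℂ) :=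
  span ℂ (v '' Set.Icc 1 (min k l))

/-- `K = {g ∈ SO(2l+1) : g e_0 = e_0}` (here `e_0 = e_{l+1}`), a copy of `SO(2l)`. -/
def Kodd (l : ℕ) : Set ((Fin (2 * l + 1) → ℂ) ≃ₗ[ℂ] (Fin (2 * l + 1) → ℂ)) :=
  {g | g ∈ SOgrp (2 * l + 1) ∧
       g (stdVec (2 * l + 1) (l + 1)) = stdVec (2 * l + 1) (l + 1)}

/-- `V'` lies in the `K`-orbit of `V`. -/
def InKOddOrbit (l : ℕ) (V V' : ℕ → Submodule ℂ (Fin (2 * l + 1) → ℂ)) : Prop :=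
  ∃ g ∈ Kodd l, actFlag (2 * l + 1) g V = V'

/-- The maximal isotropic flag
`F'_y = (ı e_l + √2 ı e_0 - ı e_{-l} ⊂ e_1 ⊂ e_2 ⊂ ⋯ ⊂ e_{l-1})` in `ℂ^{2l+1}`. -/
def FyOddVec (l m : ℕ) : Fin (2 * l + 1) → ℂ :=
  if m = 1 then
    Complex.I • stdVec (2 * l + 1) l +
      ((Real.sqrt 2 : ℂ) * Complex.I) • stdVec (2 * l + 1) (l + 1) -
      Complex.I • stdVec (2 * l + 1) (l + 2)
  else stdVec (2 * l + 1) (m - 1)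

def FyOddFlag (l : ℕ) : ℕ → Submodule ℂ (Fin (2 * l + 1) → ℂ) :=
  isoFlagOf (2 * l + 1) l (FyOddVec l)

/-- `B_{2l-1}`: elements of `SO(2l+1)` fixing `e_0` and `e_l - e_{-l}` whose matrix in the
ordered basis `(e_1, …, e_l, e_0, e_{-l}, …, e_{-1})` (the standard ordered basis) is
upper triangular; a Borel subgroup of the copy of `SO(2l-1)` inside `K`. -/
def BOddSmall (l : ℕ) : Set ((Fin (2 * l + 1) → ℂ) ≃ₗ[ℂ] (Fin (2 * l + 1) → ℂ)) :=
  {g | g ∈ SOgrp (2 * l + 1) ∧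
       g (stdVec (2 * l + 1) (l + 1)) = stdVec (2 * l + 1) (l + 1) ∧
       g (stdVec (2 * l + 1) l - stdVec (2 * l + 1) (l + 2)) =
         stdVec (2 * l + 1) l - stdVec (2 * l + 1) (l + 2) ∧
       ∀ m, 1 ≤ m → m ≤ 2 * l + 1 →
         g (stdVec (2 * l + 1) m) ∈ stdSub (2 * l + 1) m}

/-- `B_{2l}`: the Borel subgroup of `K` of elements upper triangular with respect to the
ordered basis `(e_1, …, e_l, e_0, e_{-l}, …, e_{-1})` (the standard ordered basis). -/
def BOddFull (l : ℕ) : Set ((Fin (2 * l + 1) → ℂ) ≃ₗ[ℂ] (Fin (2 * l + 1) → ℂ)) :=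
  {g | g ∈ Kodd l ∧ ∀ m, 1 ≤ m → m ≤ 2 * l + 1 →
    g (stdVec (2 * l + 1) m) ∈ stdSub (2 * l + 1) m}

/-- The standard maximal isotropic flag `E_0 = (e_1 ⊂ ⋯ ⊂ e_l)`. -/
def EOddFlag (l : ℕ) : ℕ → Submodule ℂ (Fin (2 * l + 1) → ℂ) :=
  isoFlagOf (2 * l + 1) l (stdVec (2 * l + 1))

/-- Membership in `X_W`: chains `W_1 ⊂ ⋯ ⊂ W_l ⊂ W = e_0^⊥` with `dim W_i = i`,
`β` vanishing identically on `W_l`, and `dim (W_l ∩ span(e_1,…,e_l)) ≡ l (mod 2)`. -/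
def InXW (l : ℕ) (V : ℕ → Submodule ℂ (Fin (2 * l + 1) → ℂ)) : Prop :=
  IsIsoFlag (2 * l + 1) l V ∧
    (∀ v ∈ V l, betaF (2 * l + 1) v (stdVec (2 * l + 1) (l + 1)) = 0) ∧
    finrank ℂ ↥(V l ⊓ stdSub (2 * l + 1) l) % 2 = l % 2

theorem stdVec_apply (n m : ℕ) (i : Fin n) : stdVec n m i = if (i : ℕ) + 1 = m then 1 else 0 := by
  unfold stdVec
  split_ifs with h h' h'
  · subst h'; simp
  · rw [Pi.single_apply, if_neg]
    intro h2; apply h'; rw [h2]; simp; omega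
  · exfalso; omega
  · rfl

theorem sum_stdVec (n : ℕ) (x : Fin n → ℂ) : x = ∑ i : Fin n, x i • stdVec n (i + 1) := by
  funext j
  simp [Finset.sum_apply, stdVec_apply, Fin.val_inj]

theorem mem_stdSub {n k : ℕ} {x : Fin n → ℂ} :
    x ∈ stdSub n k ↔ ∀ i : Fin n, k ≤ i → x i = 0 := by
  constructor
  · intro h i hi
    unfold stdSub at h
    induction h using Submodule.span_induction with
    | mem x hx =>
      obtain ⟨m, hm, rfl⟩ := hx
      rw [stdVec_apply, if_neg]
      have := hm.2
      omega
    | zero => rfl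
    | add x y _ _ hx hy => simp [hx, hy]
    | smul a x _ hx => simp [hx]
  · intro h
    rw [sum_stdVec n x]
    refine Submodule.sum_mem _ fun i _ => ?_
    by_cases hi : k ≤ i
    · rw [h i hi, zero_smul]; exact Submodule.zero_mem _
    · exact Submodule.smul_mem _ _ (Submodule.subset_span ⟨i + 1, ⟨by omega, by omega⟩, rfl⟩)

theorem stdVec_mem {n m k : ℕ} (h : m ≤ k) : stdVec n m ∈ stdSub n k := by
  rw [mem_stdSub]; intro i hi; rw [stdVec_apply, if_neg]; omega

theorem stdSub_mono {n k k' : ℕ} (h : k ≤ k') : stdSub n k ≤ stdSub n k' := by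
  intro x hx; rw [mem_stdSub] at *; intro i hi; exact hx i (by omega)

theorem finrank_stdSub {n k : ℕ} (h : k ≤ n) : finrank ℂ (stdSub n k) = k := by
  have h1 : stdSub n k = span ℂ (Set.range fun j : Fin k => Pi.basisFun ℂ (Fin n) (Fin.castLE h j)) := by
    unfold stdSub
    congr 1
    ext x
    constructor
    · rintro ⟨m, ⟨h1, h2⟩, rfl⟩
      refine ⟨⟨m - 1, by omega⟩, ?_⟩
      funext i
      simp only [Pi.basisFun_apply, stdVec_apply, Pi.single_apply, Fin.ext_iff, Fin.val_castLE]
      congr 1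
      apply propext; omega
    · rintro ⟨j, rfl⟩
      refine ⟨j + 1, ⟨by omega, by omega⟩, ?_⟩
      funext i
      simp only [Pi.basisFun_apply, stdVec_apply, Pi.single_apply, Fin.ext_iff, Fin.val_castLE]
      congr 1
      apply propext; omega
  rw [h1, finrank_span_eq_card]
  · simp
  · exact (Pi.basisFun ℂ (Fin n)).linearIndependent.comp _ (Fin.castLE_injective h)

/-! The bilinear form. -/

theorem betaF_comm (n : ℕ) (x y : Fin n → ℂ) : betaF n x y = betaF n y x := by
  unfold betaF
  rw [← Equiv.sum_comp Fin.revPerm]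
  simp [mul_comm]

def betaL (n : ℕ) (v : Fin n → ℂ) : Module.Dual ℂ (Fin n → ℂ) where
  toFun x := betaF n x v
  map_add' x y := by simp [betaF, add_mul, Finset.sum_add_distrib]
  map_smul' r x := by simp [betaF, mul_assoc, Finset.mul_sum]

theorem betaL_apply (n : ℕ) (x v : Fin n → ℂ) : betaL n v x = betaF n x v := rfl

theorem betaF_add_left (n : ℕ) (x y v : Fin n → ℂ) :
    betaF n (x + y) v = betaF n x v + betaF n y v := (betaL n v).map_add x y

theorem betaF_sub_left (n : ℕ) (x y v : Fin n → ℂ) :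
    betaF n (x - y) v = betaF n x v - betaF n y v := (betaL n v).map_sub x y

theorem betaF_smul_left (n : ℕ) (a : ℂ) (x v : Fin n → ℂ) :
    betaF n (a • x) v = a * betaF n x v := (betaL n v).map_smul a x

theorem betaF_add_right (n : ℕ) (x y v : Fin n → ℂ) :
    betaF n v (x + y) = betaF n v x + betaF n v y := by
  simp only [betaF_comm n v, betaF_add_left]

theorem betaF_sub_right (n : ℕ) (x y v : Fin n → ℂ) :
    betaF n v (x - y) = betaF n v x - betaF n v y := by
  simp only [betaF_comm n v, betaF_sub_left]

theorem betaF_smul_right (n : ℕ) (a : ℂ) (x v : Fin n → ℂ) :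
    betaF n v (a • x) = a * betaF n v x := by
  simp only [betaF_comm n v, betaF_smul_left]

theorem betaF_stdVec_right {n m : ℕ} (x : Fin n → ℂ) (i : Fin n) (h : (i : ℕ) + m = n) :
    betaF n x (stdVec n m) = x i := by
  unfold betaF
  rw [Finset.sum_eq_single i]
  · rw [stdVec_apply, if_pos, mul_one]
    rw [Fin.val_rev]; omega
  · intro j _ hj
    rw [stdVec_apply, if_neg, mul_zero]
    rw [Fin.val_rev]; intro h2; apply hj; ext; omega
  · simp

theorem betaF_nondeg {n : ℕ} {x : Fin n → ℂ} (h : ∀ y, betaF n x y = 0) : x = 0 := by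
  funext i
  rw [← betaF_stdVec_right (m := n - i) x i (by omega), h]; rfl

theorem mem_stdSub_iff_perp {n k k' : ℕ} (h : k + k' = n) {x : Fin n → ℂ} :
    x ∈ stdSub n k' ↔ ∀ y ∈ stdSub n k, betaF n x y = 0 := by
  constructor
  · intro hx y hy
    rw [mem_stdSub] at hx hy
    unfold betaF
    refine Finset.sum_eq_zero fun i _ => ?_
    by_cases hi : k' ≤ i
    · rw [hx i hi, zero_mul]
    · rw [hy i.rev (by rw [Fin.val_rev]; omega), mul_zero]
  · intro hx
    rw [mem_stdSub]
    intro i hi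
    rw [← betaF_stdVec_right (m := n - i) x i (by omega)]
    exact hx _ (stdVec_mem (by omega))

/-! Isometries. -/

def IsIsom (n : ℕ) (g : (Fin n → ℂ) ≃ₗ[ℂ] (Fin n → ℂ)) : Prop :=
  ∀ x y, betaF n (g x) (g y) = betaF n x y

theorem IsIsom.mul {n : ℕ} {g h : (Fin n → ℂ) ≃ₗ[ℂ] (Fin n → ℂ)} (hg : IsIsom n g)
    (hh : IsIsom n h) : IsIsom n (g * h) := by
  intro x y
  rw [LinearEquiv.mul_apply, LinearEquiv.mul_apply, hg, hh]

theorem IsIsom.symm {n : ℕ} {g : (Fin n → ℂ) ≃ₗ[ℂ] (Fin n → ℂ)} (hg : IsIsom n g) :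
    IsIsom n g.symm := by
  intro x y
  rw [← hg]; simp

theorem det_mul_equiv {n : ℕ} (g h : (Fin n → ℂ) ≃ₗ[ℂ] (Fin n → ℂ)) :
    LinearMap.det (g * h).toLinearMap = LinearMap.det g.toLinearMap * LinearMap.det h.toLinearMap := by
  rw [← LinearMap.det_comp]; rfl

theorem det_symm_equiv {n : ℕ} (g : (Fin n → ℂ) ≃ₗ[ℂ] (Fin n → ℂ)) :
    LinearMap.det g.symm.toLinearMap * LinearMap.det g.toLinearMap = 1 := by
  rw [← LinearMap.det_comp]; simp

theorem map_eq_of_le {n : ℕ} {g : (Fin n → ℂ) ≃ₗ[ℂ] (Fin n → ℂ)} {S : Submodule ℂ (Fin n → ℂ)}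
    (h : ∀ x ∈ S, g x ∈ S) : S.map g.toLinearMap = S := by
  apply Submodule.eq_of_le_of_finrank_eq
  · rintro _ ⟨x, hx, rfl⟩; exact h x hx
  · exact LinearEquiv.finrank_map_eq g S

theorem symm_mem_of_pres {n : ℕ} {g : (Fin n → ℂ) ≃ₗ[ℂ] (Fin n → ℂ)}
    {S : Submodule ℂ (Fin n → ℂ)} (h : ∀ x ∈ S, g x ∈ S) : ∀ x ∈ S, g.symm x ∈ S := by
  intro x hx
  rw [← map_eq_of_le h] at hx
  obtain ⟨y, hy, rfl⟩ := hx
  simpa using hy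

theorem pres_perp {n k k' : ℕ} (hk : k + k' = n) {g : (Fin n → ℂ) ≃ₗ[ℂ] (Fin n → ℂ)}
    (hg : IsIsom n g) (h : ∀ x ∈ stdSub n k, g x ∈ stdSub n k) :
    ∀ x ∈ stdSub n k', g x ∈ stdSub n k' := by
  intro x hx
  rw [mem_stdSub_iff_perp hk] at hx ⊢
  intro y hy
  rw [← g.apply_symm_apply y, hg]
  exact hx _ (symm_mem_of_pres h y hy)

theorem pres_of_up {n k : ℕ} (hk : k ≤ n) {g : (Fin n → ℂ) ≃ₗ[ℂ] (Fin n → ℂ)}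
    (h : ∀ m, 1 ≤ m → m ≤ n → g (stdVec n m) ∈ stdSub n m) :
    ∀ x ∈ stdSub n k, g x ∈ stdSub n k := by
  intro x hx
  have : stdSub n k ≤ (stdSub n k).comap g.toLinearMap := by
    conv_lhs => unfold stdSub
    rw [span_le]
    rintro _ ⟨m, ⟨h1, h2⟩, rfl⟩
    exact stdSub_mono h2 (h m h1 (by omega))
  exact this hx

/-- An upper triangular isometry fixing the middle vector has determinant one. -/
theorem det_up {l : ℕ} {g : (Fin (2 * l + 1) → ℂ) ≃ₗ[ℂ] (Fin (2 * l + 1) → ℂ)}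
    (hg : IsIsom (2 * l + 1) g)
    (h0 : g (stdVec (2 * l + 1) (l + 1)) = stdVec (2 * l + 1) (l + 1))
    (h : ∀ m, 1 ≤ m → m ≤ 2 * l + 1 → g (stdVec (2 * l + 1) m) ∈ stdSub (2 * l + 1) m) :
    LinearMap.det g.toLinearMap = 1 := by
  have hs : ∀ j : Fin (2 * l + 1), Pi.single j (1 : ℂ) = stdVec (2 * l + 1) (j + 1) := by
    intro j; funext i; simp [Pi.single_apply, stdVec_apply, Fin.ext_iff]
  have hM : ∀ i j, LinearMap.toMatrix' g.toLinearMap i j = g (stdVec (2 * l + 1) (j + 1)) i := by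
    intro i j
    rw [LinearMap.toMatrix'_apply, ← hs]; rfl
  rw [← LinearMap.det_toMatrix', Matrix.det_of_isUpperTriangular]
  · simp only [hM]
    apply Finset.prod_involution (fun a _ => a.rev)
    · intro a _
      have h1 := hg (stdVec (2 * l + 1) (a + 1)) (stdVec (2 * l + 1) (a.rev + 1))
      rw [betaF_stdVec_right _ a (by rw [Fin.val_rev]; omega), stdVec_apply, if_pos rfl] at h1
      rw [← h1]
      unfold betaF
      rw [Finset.sum_eq_single a]
      · intro i _ hi
        have h2 := h (a + 1) (by omega) (by omega)
        have h3 := h (a.rev + 1) (by omega) (by rw [Fin.val_rev]; omega)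
        rw [mem_stdSub] at h2 h3
        by_cases hh : (a : ℕ) < i
        · rw [h2 i hh, zero_mul]
        · rw [h3 i.rev, mul_zero]
          rw [Fin.val_rev, Fin.val_rev]
          have : (i : ℕ) ≠ a := fun h => hi (Fin.ext h)
          omega
      · simp
    · intro a _ ha h2
      apply ha
      have : (a : ℕ) = l := by
        have := congrArg Fin.val h2
        rw [Fin.val_rev] at this; omega
      rw [this, h0, stdVec_apply, if_pos]; omega
    · simp
    · simp
  · intro i j hij
    rw [hM]
    have := h (j + 1) (by omega) (by omega)
    rw [mem_stdSub] at this
    exact this i hij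

/-! Reflections. -/

theorem exists_refl {n : ℕ} (v : Fin n → ℂ) (c : ℂ) (hc : c * betaF n v v = -2) :
    ∃ r : (Fin n → ℂ) ≃ₗ[ℂ] (Fin n → ℂ), IsIsom n r ∧ LinearMap.det r.toLinearMap = -1 ∧
      (∀ x, r x = x + (c * betaF n x v) • v) ∧ ∀ x, r (r x) = x := by
  have hinv : ∀ x, LinearMap.transvection (c • betaL n v) v
      (LinearMap.transvection (c • betaL n v) v x) = x := by
    intro x
    simp only [LinearMap.transvection.apply, LinearMap.smul_apply, betaL_apply, smul_eq_mul,
      betaF_add_left, betaF_smul_left, add_assoc, ← add_smul]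
    rw [show c * betaF n x v + c * (betaF n x v + c * betaF n x v * betaF n v v) = 0 by
      linear_combination c * betaF n x v * hc]
    simp
  refine ⟨LinearEquiv.ofLinearMap (LinearMap.transvection (c • betaL n v) v)
    (LinearMap.transvection (c • betaL n v) v) (LinearMap.ext hinv) (LinearMap.ext hinv),
    ?_, ?_, fun x => rfl, hinv⟩
  · intro x y
    change betaF n (x + (c * betaF n x v) • v) (y + (c * betaF n y v) • v) = _
    simp only [betaF_add_left, betaF_add_right, betaF_smul_left, betaF_smul_right]
    rw [betaF_comm n v y]
    linear_combination c * betaF n x v * betaF n y v * hc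
  · change LinearMap.det (LinearMap.transvection (c • betaL n v) v) = -1
    rw [LinearMap.transvection.det]
    simp only [LinearMap.smul_apply, betaL_apply, smul_eq_mul, hc]
    norm_num

/-! Group structure and stabilizers. -/

theorem Kodd_mul {l : ℕ} {g h : (Fin (2 * l + 1) → ℂ) ≃ₗ[ℂ] (Fin (2 * l + 1) → ℂ)}
    (hg : g ∈ Kodd l) (hh : h ∈ Kodd l) : g * h ∈ Kodd l := by
  refine ⟨⟨?_, IsIsom.mul hg.1.2 hh.1.2⟩, ?_⟩
  · rw [det_mul_equiv, hg.1.1, hh.1.1, mul_one]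
  · rw [LinearEquiv.mul_apply, hh.2, hg.2]

theorem Kodd_symm {l : ℕ} {g : (Fin (2 * l + 1) → ℂ) ≃ₗ[ℂ] (Fin (2 * l + 1) → ℂ)}
    (hg : g ∈ Kodd l) : g.symm ∈ Kodd l := by
  refine ⟨⟨?_, IsIsom.symm hg.1.2⟩, ?_⟩
  · have := det_symm_equiv g
    rwa [hg.1.1, mul_one] at this
  · rw [LinearEquiv.symm_apply_eq, hg.2]

theorem actFlag_mul (n : ℕ) (g h : (Fin n → ℂ) ≃ₗ[ℂ] (Fin n → ℂ))
    (V : ℕ → Submodule ℂ (Fin n → ℂ)) :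
    actFlag n (g * h) V = actFlag n g (actFlag n h V) := by
  funext k
  exact Submodule.map_comp _ _ _

theorem actFlag_one (n : ℕ) (V : ℕ → Submodule ℂ (Fin n → ℂ)) :
    actFlag n 1 V = V := by
  funext k
  exact Submodule.map_id _

theorem actFlag_symm_self (n : ℕ) (g : (Fin n → ℂ) ≃ₗ[ℂ] (Fin n → ℂ))
    (V : ℕ → Submodule ℂ (Fin n → ℂ)) :
    actFlag n g.symm (actFlag n g V) = V := by
  rw [← actFlag_mul]
  have : g.symm * g = 1 := by ext1 x; simp
  rw [this, actFlag_one]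

theorem actFlag_self_symm (n : ℕ) (g : (Fin n → ℂ) ≃ₗ[ℂ] (Fin n → ℂ))
    (V : ℕ → Submodule ℂ (Fin n → ℂ)) :
    actFlag n g (actFlag n g.symm V) = V := by
  rw [← actFlag_mul]
  have : g * g.symm = 1 := by ext1 x; simp
  rw [this, actFlag_one]

theorem one_mem_Kodd (l : ℕ) : (1 : (Fin (2 * l + 1) → ℂ) ≃ₗ[ℂ] (Fin (2 * l + 1) → ℂ)) ∈ Kodd l :=
  ⟨⟨LinearMap.det_id, fun _ _ => rfl⟩, rfl⟩

theorem mem_of_act {n : ℕ} {g : (Fin n → ℂ) ≃ₗ[ℂ] (Fin n → ℂ)}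
    {S : Submodule ℂ (Fin n → ℂ)} (h : S.map g.toLinearMap = S) {x : Fin n → ℂ} (hx : x ∈ S) :
    g x ∈ S := by
  rw [← h]; exact ⟨x, hx, rfl⟩

theorem stab_E (l : ℕ) : BOddFull l =
    {g | g ∈ Kodd l ∧ actFlag (2 * l + 1) g (EOddFlag l) = EOddFlag l} := by
  ext g
  refine and_congr_right fun hg => ?_
  constructor
  · intro h
    funext k
    exact map_eq_of_le (pres_of_up (k := min k l) (by omega) h)
  · intro h
    have h1 : ∀ k, k ≤ l → ∀ x ∈ stdSub (2 * l + 1) k, g x ∈ stdSub (2 * l + 1) k := by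
      intro k hk x hx
      have h2 : EOddFlag l k = stdSub (2 * l + 1) k := by
        unfold EOddFlag isoFlagOf; rw [min_eq_left hk]; rfl
      rw [← h2] at hx ⊢
      exact mem_of_act (congrFun h k) hx
    intro m h1m hm
    by_cases hml : m ≤ l
    · exact h1 m hml _ (stdVec_mem le_rfl)
    · exact pres_perp (k := 2 * l + 1 - m) (by omega) hg.1.2 (h1 _ (by omega)) _ (stdVec_mem le_rfl)

theorem FyOddFlag_zero (l : ℕ) : FyOddFlag l 0 = ⊥ := by
  simp [FyOddFlag, isoFlagOf]

/-- The vector `e_l - e_{-l}`. -/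
def qv (l : ℕ) : Fin (2 * l + 1) → ℂ := stdVec (2 * l + 1) l - stdVec (2 * l + 1) (l + 2)

/-- The vector `e_l + e_{-l}`. -/
def pv (l : ℕ) : Fin (2 * l + 1) → ℂ := stdVec (2 * l + 1) l + stdVec (2 * l + 1) (l + 2)

theorem FyOddVec_one (l : ℕ) : FyOddVec l 1 =
    Complex.I • qv l + ((Real.sqrt 2 : ℂ) * Complex.I) • stdVec (2 * l + 1) (l + 1) := by
  unfold FyOddVec qv
  rw [if_pos rfl, smul_sub]
  abel

theorem FyOddFlag_succ {l j : ℕ} (hj : j + 1 ≤ l) :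
    FyOddFlag l (j + 1) = span ℂ {FyOddVec l 1} ⊔ stdSub (2 * l + 1) j := by
  unfold FyOddFlag isoFlagOf stdSub
  rw [min_eq_left hj, ← span_union]
  congr 1
  ext x
  constructor
  · rintro ⟨m, ⟨h1, h2⟩, rfl⟩
    by_cases hm : m = 1
    · left; rw [hm]; rfl
    · right
      refine ⟨m - 1, ⟨by omega, by omega⟩, ?_⟩
      unfold FyOddVec; rw [if_neg hm]
  · rintro (h | ⟨m, ⟨h1, h2⟩, rfl⟩)
    · exact ⟨1, ⟨by omega, by omega⟩, h.symm⟩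
    · refine ⟨m + 1, ⟨by omega, by omega⟩, ?_⟩
      unfold FyOddVec; rw [if_neg (by omega)]; rfl

theorem betaF_e0 (l : ℕ) (x : Fin (2 * l + 1) → ℂ) :
    betaF (2 * l + 1) x (stdVec (2 * l + 1) (l + 1)) = x ⟨l, by omega⟩ :=
  betaF_stdVec_right x ⟨l, by omega⟩ (by simp; omega)

theorem qv_e0 (l : ℕ) : qv l ⟨l, by omega⟩ = 0 := by
  simp [qv, stdVec_apply]

theorem pv_e0 (l : ℕ) : pv l ⟨l, by omega⟩ = 0 := by
  simp [pv, stdVec_apply]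

theorem Kodd_fix_e0 {l : ℕ} {g : (Fin (2 * l + 1) → ℂ) ≃ₗ[ℂ] (Fin (2 * l + 1) → ℂ)}
    (hg : IsIsom (2 * l + 1) g)
    (h0 : g (stdVec (2 * l + 1) (l + 1)) = stdVec (2 * l + 1) (l + 1))
    (x : Fin (2 * l + 1) → ℂ) : g x ⟨l, by omega⟩ = x ⟨l, by omega⟩ := by
  rw [← betaF_e0 l (g x), ← betaF_e0 l x]
  conv_lhs => rw [← h0]
  exact hg _ _

theorem betaF_qv {l : ℕ} (hl : 1 ≤ l) (x : Fin (2 * l + 1) → ℂ) :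
    betaF (2 * l + 1) x (qv l) = x ⟨l + 1, by omega⟩ - x ⟨l - 1, by omega⟩ := by
  unfold qv
  rw [betaF_sub_right, betaF_stdVec_right x ⟨l + 1, by omega⟩ (by simp; omega),
    betaF_stdVec_right x ⟨l - 1, by omega⟩ (by simp; omega)]

theorem betaF_pv {l : ℕ} (hl : 1 ≤ l) (x : Fin (2 * l + 1) → ℂ) :
    betaF (2 * l + 1) x (pv l) = x ⟨l + 1, by omega⟩ + x ⟨l - 1, by omega⟩ := by
  unfold pv
  rw [betaF_add_right, betaF_stdVec_right x ⟨l + 1, by omega⟩ (by simp; omega),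
    betaF_stdVec_right x ⟨l - 1, by omega⟩ (by simp; omega)]

theorem pv_pv {l : ℕ} (hl : 1 ≤ l) : betaF (2 * l + 1) (pv l) (pv l) = 2 := by
  rw [betaF_pv hl]
  simp only [pv, Pi.add_apply, stdVec_apply]
  have h : l - 1 + 1 = l := by omega
  have h' : ¬ (l + 1 + 1 = l) := by omega
  simp only [h, h']
  norm_num

theorem pv_qv {l : ℕ} (hl : 1 ≤ l) : betaF (2 * l + 1) (pv l) (qv l) = 0 := by
  rw [betaF_qv hl]
  simp only [pv, Pi.add_apply, stdVec_apply]
  have h : l - 1 + 1 = l := by omega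
  have h' : ¬ (l + 1 + 1 = l) := by omega
  simp only [h, h']
  norm_num

theorem up_of_parts {l : ℕ} (hl : 1 ≤ l)
    {g : (Fin (2 * l + 1) → ℂ) ≃ₗ[ℂ] (Fin (2 * l + 1) → ℂ)} (hg : IsIsom (2 * l + 1) g)
    (hq : g (qv l) = qv l)
    (hU : ∀ k, k < l → ∀ x ∈ stdSub (2 * l + 1) k, g x ∈ stdSub (2 * l + 1) k)
    (hp : g (pv l) - pv l ∈ stdSub (2 * l + 1) (l - 1)) :
    ∀ m, 1 ≤ m → m ≤ 2 * l + 1 → g (stdVec (2 * l + 1) m) ∈ stdSub (2 * l + 1) m := by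
  have hel : g (stdVec (2 * l + 1) l) ∈ stdSub (2 * l + 1) l := by
    have h1 : stdVec (2 * l + 1) l = (1 / 2 : ℂ) • (pv l + qv l) := by
      unfold pv qv
      rw [show ∀ a b : Fin (2 * l + 1) → ℂ, a + b + (a - b) = (2 : ℂ) • a from
        fun a b => by rw [two_smul]; abel, smul_smul]
      norm_num
    have h2 : g (stdVec (2 * l + 1) l) = stdVec (2 * l + 1) l + (1 / 2 : ℂ) • (g (pv l) - pv l) := by
      conv_lhs => rw [h1]
      conv_rhs => rw [h1]
      rw [map_smul, map_add, hq, ← smul_add]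
      congr 1; abel
    rw [h2]
    exact add_mem (stdVec_mem le_rfl) (Submodule.smul_mem _ _ (stdSub_mono (by omega) hp))
  have hU' : ∀ k, k ≤ l → ∀ x ∈ stdSub (2 * l + 1) k, g x ∈ stdSub (2 * l + 1) k := by
    intro k hk x hx
    by_cases hkl : k < l
    · exact hU k hkl x hx
    · have hk' : k = l := by omega
      subst hk'
      have h3 : x - x ⟨k - 1, by omega⟩ • stdVec (2 * k + 1) k ∈ stdSub (2 * k + 1) (k - 1) := by
        rw [mem_stdSub] at hx ⊢
        intro i hi
        simp only [Pi.sub_apply, Pi.smul_apply, stdVec_apply, smul_eq_mul]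
        by_cases hik : (i : ℕ) + 1 = k
        · have : i = ⟨k - 1, by omega⟩ := by ext; simp; omega
          rw [if_pos hik, this]; simp
        · rw [if_neg hik, hx i (by omega)]; simp
      have h4 : g x = g (x - x ⟨k - 1, by omega⟩ • stdVec (2 * k + 1) k) +
          x ⟨k - 1, by omega⟩ • g (stdVec (2 * k + 1) k) := by
        rw [map_sub, map_smul]; abel
      rw [h4]
      exact add_mem (stdSub_mono (by omega) (hU (k - 1) (by omega) _ h3))
        (Submodule.smul_mem _ _ hel)
  intro m h1m hm
  by_cases hml : m ≤ l
  · exact hU' m hml _ (stdVec_mem le_rfl)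
  · exact pres_perp (k := 2 * l + 1 - m) (by omega) hg (hU' _ (by omega)) _ (stdVec_mem le_rfl)

theorem stab_F {l : ℕ} (hl : 2 ≤ l) : BOddSmall l =
    {g | g ∈ Kodd l ∧ actFlag (2 * l + 1) g (FyOddFlag l) = FyOddFlag l} := by
  ext g
  constructor
  · rintro ⟨hso, h0, hq, hup⟩
    change g (qv l) = qv l at hq
    refine ⟨⟨hso, h0⟩, ?_⟩
    have hsucc : ∀ j, j + 1 ≤ l →
        (FyOddFlag l (j + 1)).map g.toLinearMap = FyOddFlag l (j + 1) := by
      intro j hj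
      apply map_eq_of_le
      rw [FyOddFlag_succ hj]
      intro x hx
      rw [Submodule.mem_sup] at hx ⊢
      obtain ⟨y, hy, z, hz, rfl⟩ := hx
      refine ⟨y, hy, g z, pres_of_up (by omega) hup z hz, ?_⟩
      rw [mem_span_singleton] at hy
      obtain ⟨a, rfl⟩ := hy
      rw [map_add, map_smul, FyOddVec_one, map_add, map_smul, map_smul, hq, h0]
    funext k
    by_cases hk : k = 0
    · subst hk; unfold actFlag; rw [FyOddFlag_zero, Submodule.map_bot]
    · have h3 : FyOddFlag l k = FyOddFlag l ((min k l - 1) + 1) := by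
        unfold FyOddFlag isoFlagOf
        congr 3
        omega
      unfold actFlag
      rw [h3]
      exact hsucc _ (by omega)
  · rintro ⟨hK, hF⟩
    have hg : IsIsom (2 * l + 1) g := hK.1.2
    have h0 := hK.2
    have hs2 : (Real.sqrt 2 : ℂ) * Complex.I ≠ 0 := by simp
    have hv1 : FyOddVec l 1 ⟨l, by omega⟩ = (Real.sqrt 2 : ℂ) * Complex.I := by
      rw [FyOddVec_one, Pi.add_apply, Pi.smul_apply, qv_e0, Pi.smul_apply, stdVec_apply,
        if_pos rfl]; simp
    have hU : ∀ k, k < l → ∀ x ∈ stdSub (2 * l + 1) k, g x ∈ stdSub (2 * l + 1) k := by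
      intro k hk x hx
      have h1 : x ∈ FyOddFlag l (k + 1) := by
        rw [FyOddFlag_succ hk]; exact Submodule.mem_sup_right hx
      have h2 : g x ∈ FyOddFlag l (k + 1) := mem_of_act (congrFun hF (k + 1)) h1
      rw [FyOddFlag_succ hk, Submodule.mem_sup] at h2
      obtain ⟨y, hy, z, hz, hyz⟩ := h2
      rw [mem_span_singleton] at hy
      obtain ⟨a, rfl⟩ := hy
      have h3 := congrFun hyz ⟨l, by omega⟩
      rw [Kodd_fix_e0 hg h0, mem_stdSub.1 hx ⟨l, by omega⟩ (by simp; omega), Pi.add_apply,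
        mem_stdSub.1 hz ⟨l, by omega⟩ (by simp; omega), Pi.smul_apply, hv1, add_zero,
        smul_eq_mul] at h3
      have h4 : a = 0 := (mul_eq_zero.1 h3).resolve_right hs2
      rw [← hyz, h4, zero_smul, zero_add]
      exact hz
    have hq : g (qv l) = qv l := by
      have h1 : FyOddVec l 1 ∈ FyOddFlag l (0 + 1) := by
        rw [FyOddFlag_succ (by omega)]
        exact Submodule.mem_sup_left (mem_span_singleton_self _)
      have h2 : g (FyOddVec l 1) ∈ FyOddFlag l (0 + 1) := mem_of_act (congrFun hF (0 + 1)) h1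
      rw [FyOddFlag_succ (by omega), Submodule.mem_sup] at h2
      obtain ⟨y, hy, z, hz, hyz⟩ := h2
      rw [mem_span_singleton] at hy
      obtain ⟨a, rfl⟩ := hy
      have hz0 : z = 0 := by
        funext i; exact mem_stdSub.1 hz i (by omega)
      rw [hz0, add_zero] at hyz
      have h3 := congrFun hyz ⟨l, by omega⟩
      rw [Kodd_fix_e0 hg h0, Pi.smul_apply, hv1, smul_eq_mul] at h3
      have h4 : a = 1 := mul_right_cancel₀ hs2 (by rw [h3, one_mul])
      rw [h4, one_smul, FyOddVec_one, map_add, map_smul, map_smul, h0] at hyz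
      have h5 := add_right_cancel hyz
      exact (smul_right_injective _ Complex.I_ne_zero h5).symm
    have hl1 : 1 ≤ l := by omega
    -- the image of `p`
    have hgpU : g (pv l) ∈ stdSub (2 * l + 1) (l + 2) := by
      apply pres_perp (k := l - 1) (by omega) hg (hU (l - 1) (by omega))
      exact add_mem (stdVec_mem (by omega)) (stdVec_mem le_rfl)
    have hxy : g (pv l) ⟨l + 1, by omega⟩ = g (pv l) ⟨l - 1, by omega⟩ := by
      have : betaF (2 * l + 1) (g (pv l)) (qv l) = 0 := by
        conv_lhs => rw [← hq]
        rw [hg, pv_qv hl1]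
      rw [betaF_qv hl1] at this
      exact sub_eq_zero.1 this
    set c := g (pv l) ⟨l - 1, by omega⟩ with hc
    have hu : g (pv l) - c • pv l ∈ stdSub (2 * l + 1) (l - 1) := by
      rw [mem_stdSub] at hgpU ⊢
      intro i hi
      by_cases h1 : (i : ℕ) = l - 1
      · have h2 : i = ⟨l - 1, by omega⟩ := Fin.ext h1
        rw [h2]
        simp only [Pi.sub_apply, Pi.smul_apply, pv, Pi.add_apply, stdVec_apply]
        have h : l - 1 + 1 = l := by omega
        have h' : ¬ (l = l + 2) := by omega
        simp [h, hc, pv]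
      by_cases h1 : (i : ℕ) = l
      · have h2 : i = ⟨l, by omega⟩ := Fin.ext h1
        rw [h2]
        rw [Pi.sub_apply, Kodd_fix_e0 hg h0, Pi.smul_apply, pv_e0]; simp
      by_cases h1 : (i : ℕ) = l + 1
      · have h2 : i = ⟨l + 1, by omega⟩ := Fin.ext h1
        rw [h2]
        rw [Pi.sub_apply, hxy]
        simp only [Pi.smul_apply, pv, Pi.add_apply, stdVec_apply]
        have h' : ¬ (l + 1 + 1 = l) := by omega
        simp [h']
      rw [Pi.sub_apply, hgpU i (by omega)]
      simp only [Pi.smul_apply, pv, Pi.add_apply, stdVec_apply]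
      rw [if_neg (by omega), if_neg (by omega)]; simp
    have hc2 : c * c = 1 := by
      have h1 := hg (pv l) (pv l)
      set u := g (pv l) - c • pv l with hudef
      have h2 : g (pv l) = u + c • pv l := by rw [hudef]; abel
      have huu : betaF (2 * l + 1) u u = 0 :=
        (mem_stdSub_iff_perp (k := l - 1) (k' := l + 2) (by omega)).1
          (stdSub_mono (by omega) hu) u hu
      have hup : betaF (2 * l + 1) u (pv l) = 0 := by
        rw [betaF_pv hl1, mem_stdSub.1 hu _ (by simp; omega), mem_stdSub.1 hu _ (by simp)]
        simp
      rw [h2] at h1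
      simp only [betaF_add_left, betaF_add_right, betaF_smul_left, betaF_smul_right] at h1
      rw [betaF_comm _ (pv l) u, huu, hup, pv_pv hl1] at h1
      linear_combination h1 / 2
    refine ⟨hK.1, h0, hq, ?_⟩
    rcases mul_self_eq_one_iff.1 hc2 with h1 | h1
    · rw [h1, one_smul] at hu
      exact up_of_parts hl1 hg hq hU hu
    · exfalso
      obtain ⟨r, hr, hrdet, hrx, -⟩ := exists_refl (pv l) (-1) (by rw [pv_pv hl1]; norm_num)
      have hr0 : r (stdVec (2 * l + 1) (l + 1)) = stdVec (2 * l + 1) (l + 1) := by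
        rw [hrx, betaF_comm, betaF_e0, pv_e0]; simp
      have hrq : r (qv l) = qv l := by
        rw [hrx, betaF_comm, pv_qv hl1]; simp
      have hrp : r (pv l) = - pv l := by
        rw [hrx, pv_pv hl1]
        rw [show (-1 : ℂ) * 2 = -1 + -1 by norm_num, add_smul, neg_one_smul]; abel
      have hrU : ∀ k, k < l → ∀ x ∈ stdSub (2 * l + 1) k, r x = x := by
        intro k hk x hx
        rw [hrx, betaF_pv hl1, mem_stdSub.1 hx _ (by simp; omega),
          mem_stdSub.1 hx _ (by simp; omega)]
        simp
      have hdet : LinearMap.det (g * r).toLinearMap = 1 := by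
        apply det_up (hg.mul hr)
        · rw [LinearEquiv.mul_apply, hr0, h0]
        · apply up_of_parts hl1 (hg.mul hr)
          · rw [LinearEquiv.mul_apply, hrq, hq]
          · intro k hk x hx
            rw [LinearEquiv.mul_apply, hrU k hk x hx]
            exact hU k hk x hx
          · rw [LinearEquiv.mul_apply, hrp, map_neg]
            have := neg_mem hu
            rw [h1] at this
            convert this using 1
            simp; abel
      rw [det_mul_equiv, hK.1.1, hrdet] at hdet
      norm_num at hdet

theorem orbit_eq_iff {n : ℕ} {K : Set ((Fin n → ℂ) ≃ₗ[ℂ] (Fin n → ℂ))}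
    (hmul : ∀ g ∈ K, ∀ h ∈ K, g * h ∈ K) (hsymm : ∀ g ∈ K, g.symm ∈ K) (hone : 1 ∈ K)
    (F V V' : ℕ → Submodule ℂ (Fin n → ℂ)) :
    orbitOf n {g | g ∈ K ∧ actFlag n g F = F} V = orbitOf n {g | g ∈ K ∧ actFlag n g F = F} V' ↔
      ∃ b ∈ K, actFlag n b F = F ∧ actFlag n b V = V' := by
  constructor
  · intro h
    have : V' ∈ orbitOf n {g | g ∈ K ∧ actFlag n g F = F} V' :=
      ⟨1, ⟨hone, actFlag_one n F⟩, actFlag_one n V'⟩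
    rw [← h] at this
    obtain ⟨b, hb, hbV⟩ := this
    exact ⟨b, hb.1, hb.2, hbV⟩
  · rintro ⟨b, hb, hbF, rfl⟩
    ext X
    constructor
    · rintro ⟨c, ⟨hc, hcF⟩, rfl⟩
      refine ⟨c * b.symm, ⟨hmul _ hc _ (hsymm _ hb), ?_⟩, ?_⟩
      · rw [actFlag_mul]
        conv_lhs => rw [← hbF]
        rw [actFlag_symm_self, hcF]
      · rw [actFlag_mul, actFlag_symm_self]
    · rintro ⟨c, ⟨hc, hcF⟩, rfl⟩
      refine ⟨c * b, ⟨hmul _ hc _ hb, ?_⟩, ?_⟩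
      · rw [actFlag_mul, hbF, hcF]
      · rw [actFlag_mul]

theorem exists_iff {n : ℕ} {K : Set ((Fin n → ℂ) ≃ₗ[ℂ] (Fin n → ℂ))}
    (hmul : ∀ g ∈ K, ∀ h ∈ K, g * h ∈ K) (hsymm : ∀ g ∈ K, g.symm ∈ K)
    (E F : ℕ → Submodule ℂ (Fin n → ℂ)) {a a' : (Fin n → ℂ) ≃ₗ[ℂ] (Fin n → ℂ)}
    (ha : a ∈ K) (ha' : a' ∈ K) (h : ∃ b ∈ K, actFlag n b E = E ∧
      actFlag n b (actFlag n a F) = actFlag n a' F) :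
    ∃ b ∈ K, actFlag n b F = F ∧
      actFlag n b (actFlag n a.symm E) = actFlag n a'.symm E := by
  obtain ⟨b, hb, hbE, hbF⟩ := h
  refine ⟨a'.symm * (b * a), hmul _ (hsymm _ ha') _ (hmul _ hb _ ha), ?_, ?_⟩
  · rw [actFlag_mul, actFlag_mul, hbF, actFlag_symm_self]
  · rw [actFlag_mul, actFlag_mul, actFlag_self_symm, hbE]

/-! Transitivity. -/

theorem exists_lagr (l : ℕ) : ∀ (d : ℕ) (L : Submodule ℂ (Fin (2 * l + 1) → ℂ)),
    finrank ℂ L = l → (∀ u ∈ L, ∀ w ∈ L, betaF (2 * l + 1) u w = 0) →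
    (∀ v ∈ L, betaF (2 * l + 1) v (stdVec (2 * l + 1) (l + 1)) = 0) →
    finrank ℂ ↥(L ⊓ stdSub (2 * l + 1) l) + d = l →
    ∃ g : (Fin (2 * l + 1) → ℂ) ≃ₗ[ℂ] (Fin (2 * l + 1) → ℂ), IsIsom (2 * l + 1) g ∧
      g (stdVec (2 * l + 1) (l + 1)) = stdVec (2 * l + 1) (l + 1) ∧
      LinearMap.det g.toLinearMap = (-1) ^ d ∧
      (stdSub (2 * l + 1) l).map g.toLinearMap = L := by
  intro d
  induction d with
  | zero =>
    intro L hL _ _ hd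
    refine ⟨1, fun _ _ => rfl, rfl, ?_, ?_⟩
    · rw [pow_zero]; exact LinearMap.det_id
    · have h1 : L ⊓ stdSub (2 * l + 1) l = L :=
        Submodule.eq_of_le_of_finrank_eq inf_le_left (by omega)
      have h2 : L ⊓ stdSub (2 * l + 1) l = stdSub (2 * l + 1) l :=
        Submodule.eq_of_le_of_finrank_eq inf_le_right
          (by rw [finrank_stdSub (by omega)]; omega)
      rw [← h1]
      conv_rhs => rw [h2]
      exact Submodule.map_id _
  | succ d ih =>
    intro L hL hiso he hd
    have hex : ∃ c' ∈ L, c' ∉ stdSub (2 * l + 1) l := by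
      by_contra! hcon
      have : L ⊓ stdSub (2 * l + 1) l = L := inf_eq_left.2 hcon
      rw [this] at hd
      omega
    obtain ⟨c', hc'L, hc'U⟩ := hex
    have hc'2 : c' ∉ stdSub (2 * l + 1) (l + 1) := by
      intro h
      apply hc'U
      rw [mem_stdSub] at h ⊢
      intro i hi
      by_cases hil : (i : ℕ) = l
      · have h2 : i = ⟨l, by omega⟩ := Fin.ext hil
        rw [h2, ← betaF_e0 l c', he c' hc'L]
      · exact h i (by omega)
    rw [mem_stdSub_iff_perp (k := l) (by omega)] at hc'2
    push Not at hc'2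
    obtain ⟨y, hyU, hy⟩ := hc'2
    obtain ⟨c, hcU, hcc'⟩ : ∃ c ∈ stdSub (2 * l + 1) l, betaF (2 * l + 1) c c' = 1 := by
      refine ⟨(betaF (2 * l + 1) c' y)⁻¹ • y, Submodule.smul_mem _ _ hyU, ?_⟩
      rw [betaF_smul_left, betaF_comm _ y, inv_mul_cancel₀ hy]
    have hUU : ∀ u ∈ stdSub (2 * l + 1) l, ∀ w ∈ stdSub (2 * l + 1) l,
        betaF (2 * l + 1) u w = 0 := fun u hu w hw =>
      (mem_stdSub_iff_perp (k := l) (k' := l + 1) (by omega)).1 (stdSub_mono (by omega) hu) w hw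
    have hce : betaF (2 * l + 1) c (stdVec (2 * l + 1) (l + 1)) = 0 := by
      rw [betaF_e0]; exact mem_stdSub.1 hcU _ le_rfl
    have hcL : c ∉ L := by
      intro h
      have := hiso c h c' hc'L
      rw [hcc'] at this; exact one_ne_zero this
    have hvv : (1 : ℂ) * betaF (2 * l + 1) (c - c') (c - c') = -2 := by
      simp only [betaF_sub_left, betaF_sub_right]
      rw [betaF_comm _ c' c, hcc', hUU c hcU c hcU, hiso c' hc'L c' hc'L]; norm_num
    obtain ⟨r, hr, hrdet, hrx, hrr⟩ := exists_refl (c - c') 1 hvv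
    have hr0 : r (stdVec (2 * l + 1) (l + 1)) = stdVec (2 * l + 1) (l + 1) := by
      rw [hrx, betaF_comm, betaF_sub_left, hce, he c' hc'L]; simp
    have hrL : ∀ y ∈ L, r y = y + betaF (2 * l + 1) y c • (c - c') := by
      intro y hy
      rw [hrx, betaF_sub_right, hiso y hy c' hc'L, sub_zero, one_mul]
    have hint : L.map r.toLinearMap ⊓ stdSub (2 * l + 1) l =
        (L ⊓ stdSub (2 * l + 1) l) ⊔ span ℂ {c} := by
      apply le_antisymm
      · rintro x ⟨⟨y, hy, rfl⟩, hxU⟩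
        change r y ∈ stdSub (2 * l + 1) l at hxU
        change r y ∈ _
        rw [hrL y hy] at hxU ⊢
        have h1 : y - betaF (2 * l + 1) y c • c' ∈ L ⊓ stdSub (2 * l + 1) l := by
          refine ⟨sub_mem hy (Submodule.smul_mem _ _ hc'L), ?_⟩
          have := sub_mem hxU (Submodule.smul_mem _ (betaF (2 * l + 1) y c) hcU)
          rw [show y + betaF (2 * l + 1) y c • (c - c') - betaF (2 * l + 1) y c • c =
            y - betaF (2 * l + 1) y c • c' by rw [smul_sub]; abel] at this
          exact this
        rw [Submodule.mem_sup]
        refine ⟨_, h1, betaF (2 * l + 1) y c • c,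
          Submodule.smul_mem _ _ (mem_span_singleton_self _), ?_⟩
        rw [smul_sub]; abel
      · refine sup_le ?_ ?_
        · rintro x ⟨hxL, hxU⟩
          refine ⟨⟨x, hxL, ?_⟩, hxU⟩
          change r x = x
          rw [hrL x hxL, hUU x hxU c hcU]; simp
        · rw [span_singleton_le_iff_mem]
          refine ⟨⟨c', hc'L, ?_⟩, hcU⟩
          change r c' = c
          rw [hrL c' hc'L, betaF_comm, hcc']; simp
    have hfr : finrank ℂ ↥(L.map r.toLinearMap ⊓ stdSub (2 * l + 1) l) + d = l := by
      rw [hint, finrank_sup_span_singleton (fun h => hcL (Submodule.mem_inf.1 h).1)]; omega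
    obtain ⟨g, hg, hg0, hgdet, hgU⟩ := ih (L.map r.toLinearMap)
      (by rw [LinearEquiv.finrank_map_eq r L, hL])
      (by
        rintro _ ⟨u, hu, rfl⟩ _ ⟨w, hw, rfl⟩
        exact (hr u w).trans (hiso u hu w hw))
      (by
        rintro _ ⟨u, hu, rfl⟩
        rw [← hr0]
        exact (hr _ _).trans (he u hu))
      hfr
    refine ⟨r * g, hr.mul hg, ?_, ?_, ?_⟩
    · rw [LinearEquiv.mul_apply, hg0, hr0]
    · rw [det_mul_equiv, hrdet, hgdet, pow_succ]; ring
    · have : (stdSub (2 * l + 1) l).map (r * g).toLinearMap =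
          ((stdSub (2 * l + 1) l).map g.toLinearMap).map r.toLinearMap :=
        Submodule.map_comp _ _ _
      rw [this, hgU, ← Submodule.map_comp]
      convert Submodule.map_id L using 2
      exact LinearMap.ext hrr

theorem stdSub_succ (n i : ℕ) : stdSub n (i + 1) = stdSub n i ⊔ span ℂ {stdVec n (i + 1)} := by
  unfold stdSub
  rw [← span_union]
  congr 1
  ext x
  constructor
  · rintro ⟨m, ⟨h1, h2⟩, rfl⟩
    by_cases hm : m = i + 1
    · right; rw [hm]; rfl
    · left; exact ⟨m, ⟨h1, by omega⟩, rfl⟩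
  · rintro (⟨m, ⟨h1, h2⟩, rfl⟩ | h)
    · exact ⟨m, ⟨h1, by omega⟩, rfl⟩
    · exact ⟨i + 1, ⟨by omega, by omega⟩, h.symm⟩

theorem stdSub_zero (n : ℕ) : stdSub n 0 = ⊥ := by
  simp [stdSub]

theorem mulVec_stdVec {n : ℕ} (N : Matrix (Fin n) (Fin n) ℂ) (j : Fin n) :
    N.mulVec (stdVec n (j + 1)) = fun i => N i j := by
  funext i
  simp [Matrix.mulVec, dotProduct, stdVec_apply, Fin.val_inj]

/-- The adjoint matrix with respect to the bilinear form. -/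
def adjM {n : ℕ} (N : Matrix (Fin n) (Fin n) ℂ) : Matrix (Fin n) (Fin n) ℂ :=
  fun i j => N j.rev i.rev

theorem betaF_adjM {n : ℕ} (N : Matrix (Fin n) (Fin n) ℂ) (x y : Fin n → ℂ) :
    betaF n (N.mulVec x) y = betaF n x ((adjM N).mulVec y) := by
  simp only [betaF, Matrix.mulVec, dotProduct, adjM, Finset.sum_mul, Finset.mul_sum, Fin.rev_rev]
  rw [Finset.sum_comm]
  refine Finset.sum_congr rfl fun j _ => ?_
  rw [← Equiv.sum_comp Fin.revPerm]
  refine Finset.sum_congr rfl fun i _ => ?_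
  simp only [Fin.revPerm_apply, Fin.rev_rev]
  ring

theorem exists_levi (l : ℕ) (V : ℕ → Submodule ℂ (Fin (2 * l + 1) → ℂ))
    (hfr : ∀ i, i ≤ l → finrank ℂ ↥(V i) = i) (hmono : ∀ i, V i ≤ V (i + 1))
    (hVl : V l = stdSub (2 * l + 1) l) :
    ∃ g ∈ Kodd l, ∀ i, i ≤ l → (stdSub (2 * l + 1) i).map g.toLinearMap = V i := by
  have hex : ∀ i, ∃ w, i < l → w ∈ V (i + 1) ∧ w ∉ V i := by
    intro i
    by_cases hi : i < l
    · by_contra! hcon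
      have h1 : V (i + 1) ≤ V i := fun w hw => by
        by_contra h2
        have := hcon w
        exact h2 (this.2 hw)
      have h2 := Submodule.finrank_mono h1
      rw [hfr i (by omega), hfr (i + 1) (by omega)] at h2
      omega
    · exact ⟨0, fun h => absurd h hi⟩
  choose w hw using hex
  have hVsucc : ∀ i, i < l → V (i + 1) = V i ⊔ span ℂ {w i} := by
    intro i hi
    symm
    apply Submodule.eq_of_le_of_finrank_eq
    · exact sup_le (hmono i) ((span_singleton_le_iff_mem _ _).2 (hw i hi).1)
    · rw [finrank_sup_span_singleton (hw i hi).2, hfr i (by omega), hfr (i + 1) (by omega)]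
  have hVle : ∀ i j, i ≤ j → V i ≤ V j := fun i j h => monotone_nat_of_le_succ hmono h
  have hwU : ∀ j, j < l → w j ∈ stdSub (2 * l + 1) l := fun j hj => by
    rw [← hVl]; exact hVle (j + 1) l hj (hw j hj).1
  let N : Matrix (Fin (2 * l + 1)) (Fin (2 * l + 1)) ℂ :=
    fun i j => if (j : ℕ) < l then w j i - stdVec (2 * l + 1) (j + 1) i else 0
  have hNcol : ∀ (i j : Fin (2 * l + 1)), l ≤ (j : ℕ) → N i j = 0 := by
    intro i j hj
    simp only [N]; rw [if_neg (by omega)]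
  have hNrow : ∀ (i j : Fin (2 * l + 1)), l ≤ (i : ℕ) → N i j = 0 := by
    intro i j hi
    simp only [N]
    split_ifs with h
    · rw [mem_stdSub.1 (hwU j h) i hi, stdVec_apply, if_neg (by omega), sub_zero]
    · rfl
  have hNN' : N * adjM N = 0 := by
    ext i j
    rw [Matrix.mul_apply]
    refine Finset.sum_eq_zero fun k _ => ?_
    by_cases hk : l ≤ (k : ℕ)
    · rw [hNcol i k hk, zero_mul]
    · rw [show adjM N k j = N j.rev k.rev from rfl, hNcol _ k.rev (by rw [Fin.val_rev]; omega),
        mul_zero]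
  have hN'N : adjM N * N = 0 := by
    ext i j
    rw [Matrix.mul_apply]
    refine Finset.sum_eq_zero fun k _ => ?_
    by_cases hk : l ≤ (k : ℕ)
    · rw [hNrow k j hk, mul_zero]
    · rw [show adjM N i k = N k.rev i.rev from rfl, hNrow k.rev _ (by rw [Fin.val_rev]; omega),
        zero_mul]
  have hadj1 : adjM (1 + N) = 1 + adjM N := by
    ext i j
    simp only [adjM, Matrix.add_apply, Matrix.one_apply, Fin.rev_inj]
    congr 1
    simp only [eq_comm]
  have hcomm : (1 + N) * adjM (1 + N) = adjM (1 + N) * (1 + N) := by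
    rw [hadj1, mul_add, add_mul, add_mul, mul_add, add_mul, add_mul, hNN', hN'N]
    simp only [mul_one, one_mul, add_zero]
    abel
  have hMcol : ∀ j, j < l → (1 + N).mulVec (stdVec (2 * l + 1) (j + 1)) = w j := by
    intro j hj
    have := mulVec_stdVec N ⟨j, by omega⟩
    rw [Matrix.add_mulVec, Matrix.one_mulVec]
    simp only at this
    rw [this]
    funext i
    simp only [N, Pi.add_apply]
    rw [if_pos hj]; ring
  have hMcol' : ∀ j, l ≤ j → j < 2 * l + 1 → (1 + N).mulVec (stdVec (2 * l + 1) (j + 1)) =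
      stdVec (2 * l + 1) (j + 1) := by
    intro j hj hj2
    have := mulVec_stdVec N ⟨j, hj2⟩
    rw [Matrix.add_mulVec, Matrix.one_mulVec]
    simp only at this
    rw [this]
    funext i
    rw [Pi.add_apply, hNcol _ _ hj, add_zero]
  have hmap : ∀ i, i ≤ l → (stdSub (2 * l + 1) i).map (Matrix.toLin' (1 + N)) = V i := by
    intro i
    induction i with
    | zero =>
      intro _
      rw [stdSub_zero, Submodule.map_bot]
      exact (Submodule.finrank_eq_zero.1 (hfr 0 (by omega))).symm
    | succ i ih =>
      intro hi
      rw [stdSub_succ, Submodule.map_sup, ih (by omega), hVsucc i hi, Submodule.map_span,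
        Set.image_singleton, Matrix.toLin'_apply, hMcol i hi]
  have hsurj : Function.Surjective (Matrix.toLin' (1 + N)) := by
    rw [← LinearMap.range_eq_top, eq_top_iff]
    intro x _
    rw [sum_stdVec _ x]
    refine Submodule.sum_mem _ fun i _ => Submodule.smul_mem _ _ ?_
    by_cases hi : (i : ℕ) < l
    · have h1 : stdVec (2 * l + 1) (i + 1) ∈ V l := by
        rw [hVl]; exact stdVec_mem hi
      rw [← hmap l le_rfl] at h1
      exact LinearMap.map_le_range h1
    · exact ⟨_, hMcol' i (by omega) i.2⟩
  have hinj : Function.Injective (Matrix.toLin' (1 + N)) :=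
    LinearMap.injective_iff_surjective.2 hsurj
  have hinj' : Function.Injective (Matrix.toLin' (adjM (1 + N))) := by
    rw [injective_iff_map_eq_zero]
    intro y hy
    apply betaF_nondeg
    intro z
    obtain ⟨x, rfl⟩ := hsurj z
    rw [betaF_comm, Matrix.toLin'_apply, betaF_adjM]
    rw [Matrix.toLin'_apply] at hy
    rw [hy]
    simp [betaF]
  let H := LinearEquiv.ofInjectiveEndo _ hinj
  let H' := LinearEquiv.ofInjectiveEndo _ hinj'
  have hH : ∀ x, H x = (1 + N).mulVec x := fun x => rfl
  have hH' : ∀ x, H' x = (adjM (1 + N)).mulVec x := fun x => rfl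
  have hH'U : ∀ x ∈ stdSub (2 * l + 1) (l + 1), H' x = x := by
    intro x hx
    rw [hH', hadj1, Matrix.add_mulVec, Matrix.one_mulVec]
    convert add_zero x
    funext i
    simp only [Matrix.mulVec, dotProduct, adjM]
    refine Finset.sum_eq_zero fun k _ => ?_
    by_cases hk : l + 1 ≤ (k : ℕ)
    · rw [mem_stdSub.1 hx k hk, mul_zero]
    · rw [hNrow _ _ (by rw [Fin.val_rev]; omega), zero_mul]
  have hHsymm : ∀ x ∈ stdSub (2 * l + 1) (l + 1), H'.symm x = x := by
    intro x hx
    rw [LinearEquiv.symm_apply_eq, hH'U x hx]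
  refine ⟨H * H'.symm, ⟨⟨?_, ?_⟩, ?_⟩, ?_⟩
  · have hd : LinearMap.det H.toLinearMap = LinearMap.det H'.toLinearMap := by
      change LinearMap.det (Matrix.toLin' (1 + N)) = LinearMap.det (Matrix.toLin' (adjM (1 + N)))
      rw [LinearMap.det_toLin', LinearMap.det_toLin']
      have : adjM (1 + N) = (1 + N).transpose.submatrix Fin.revPerm Fin.revPerm := rfl
      rw [this, Matrix.det_submatrix_equiv_self, Matrix.det_transpose]
    rw [det_mul_equiv, hd, mul_comm, det_symm_equiv]
  · intro x y
    obtain ⟨x, rfl⟩ := H'.surjective x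
    obtain ⟨y, rfl⟩ := H'.surjective y
    rw [LinearEquiv.mul_apply, LinearEquiv.mul_apply, LinearEquiv.symm_apply_apply,
      LinearEquiv.symm_apply_apply, betaF_comm _ (H' x) (H' y), hH' x, ← betaF_adjM, hH x,
      betaF_adjM (1 + N) x (H y), betaF_comm _ ((1 + N).mulVec (H' y)) x, hH, hH', Matrix.mulVec_mulVec, Matrix.mulVec_mulVec, hcomm]
  · rw [LinearEquiv.mul_apply, hHsymm _ (stdVec_mem le_rfl), hH, hMcol' l le_rfl (by omega)]
  · intro i hi
    rw [← hmap i hi]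
    ext z
    constructor
    · rintro ⟨x, hx, rfl⟩
      refine ⟨x, hx, ?_⟩
      change H x = H (H'.symm x)
      rw [hHsymm x (stdSub_mono (by omega) hx)]
    · rintro ⟨x, hx, rfl⟩
      refine ⟨x, hx, ?_⟩
      change H (H'.symm x) = H x
      rw [hHsymm x (stdSub_mono (by omega) hx)]

theorem exists_act {l : ℕ} {W : ℕ → Submodule ℂ (Fin (2 * l + 1) → ℂ)} (hW : InXW l W) :
    ∃ g ∈ Kodd l, actFlag (2 * l + 1) g (EOddFlag l) = W := by
  obtain ⟨⟨hfr, hmono, hconst, hiso⟩, he, hpar⟩ := hW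
  have hle : finrank ℂ ↥(W l ⊓ stdSub (2 * l + 1) l) ≤ l := by
    have := Submodule.finrank_mono (inf_le_left : W l ⊓ stdSub (2 * l + 1) l ≤ W l)
    rwa [hfr l le_rfl] at this
  obtain ⟨g, hg, hg0, hgdet, hgU⟩ := exists_lagr l
    (l - finrank ℂ ↥(W l ⊓ stdSub (2 * l + 1) l)) (W l) (hfr l le_rfl) hiso he (by omega)
  have hev : Even (l - finrank ℂ ↥(W l ⊓ stdSub (2 * l + 1) l)) := by
    rw [Nat.even_iff]; omega
  rw [hev.neg_one_pow] at hgdet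
  have hgK : g ∈ Kodd l := ⟨⟨hgdet, hg⟩, hg0⟩
  have hss := actFlag_symm_self (2 * l + 1) g
  obtain ⟨h, hhK, hh⟩ := exists_levi l (actFlag (2 * l + 1) g.symm W)
    (fun i hi => by
      unfold actFlag
      rw [LinearEquiv.finrank_map_eq g.symm (W i), hfr i hi])
    (fun i => Submodule.map_mono (hmono i))
    (by
      have := congrFun (hss (fun _ => stdSub (2 * l + 1) l)) 0
      unfold actFlag at this ⊢
      rw [← hgU, this])
  refine ⟨g * h, Kodd_mul hgK hhK, ?_⟩
  rw [actFlag_mul]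
  have h1 : actFlag (2 * l + 1) h (EOddFlag l) = actFlag (2 * l + 1) g.symm W := by
    funext k
    have h2 : actFlag (2 * l + 1) g.symm W k = actFlag (2 * l + 1) g.symm W (min k l) := by
      unfold actFlag
      congr 1
      rcases le_total k l with hk | hk
      · rw [min_eq_left hk]
      · rw [min_eq_right hk, hconst k hk]
    rw [h2]
    exact hh (min k l) (by omega)
  rw [h1, actFlag_self_symm]

/-- `B_{2l}·(k·F'_y) = B_{2l}·(k'·F'_y)` iff `B_{2l-1}·(k⁻¹·E_0) = B_{2l-1}·(k'⁻¹·E_0)`,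
and every `B_{2l-1}`-orbit on `X_W` arises as some `B_{2l-1}·(k⁻¹·E_0)`; hence
`B_{2l}·(k·F'_y) ↦ B_{2l-1}·(k⁻¹·E_0)` is a well-defined bijection from the
`B_{2l}`-orbits on `K·F'_y` onto the `B_{2l-1}`-orbits on `X_W`. -/
theorem stmt_10 (l : ℕ) (hl : 2 ≤ l) :
    (∀ a ∈ Kodd l, ∀ a' ∈ Kodd l,
      (orbitOf (2 * l + 1) (BOddFull l) (actFlag (2 * l + 1) a (FyOddFlag l)) =
          orbitOf (2 * l + 1) (BOddFull l) (actFlag (2 * l + 1) a' (FyOddFlag l)) ↔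
        orbitOf (2 * l + 1) (BOddSmall l) (actFlag (2 * l + 1) a.symm (EOddFlag l)) =
          orbitOf (2 * l + 1) (BOddSmall l) (actFlag (2 * l + 1) a'.symm (EOddFlag l)))) ∧
    (∀ W, InXW l W →
      ∃ a ∈ Kodd l,
        orbitOf (2 * l + 1) (BOddSmall l) (actFlag (2 * l + 1) a.symm (EOddFlag l)) =
          orbitOf (2 * l + 1) (BOddSmall l) W) := by
  have hmul : ∀ g ∈ Kodd l, ∀ h ∈ Kodd l, g * h ∈ Kodd l := fun g hg h hh => Kodd_mul hg hh
  have hsymm : ∀ g ∈ Kodd l, g.symm ∈ Kodd l := fun g hg => Kodd_symm hg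
  rw [stab_E, stab_F hl]
  refine ⟨fun a ha a' ha' => ?_, fun W hW => ?_⟩
  · rw [orbit_eq_iff hmul hsymm (one_mem_Kodd l), orbit_eq_iff hmul hsymm (one_mem_Kodd l)]
    constructor
    · exact exists_iff hmul hsymm _ _ ha ha'
    · intro h
      exact exists_iff (a := a.symm) (a' := a'.symm) hmul hsymm _ _ (hsymm a ha) (hsymm a' ha') h
  · obtain ⟨g, hg, hgW⟩ := exists_act hW
    refine ⟨g.symm, hsymm g hg, ?_⟩
    rw [LinearEquiv.symm_symm, hgW]
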